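/- arXiv:1005.1635 — 5 statements merged into one kernel-verified Lean document; each statement's English description precedes it below -/
import Mathlib

section
/- Let a, P1, P2 be real numbers with a > 0, P2 ≥ 0 and a^2 * P1 ≥ 1. Then C(2*a^2*P1 + 2*P2) ≤ C( (a^2*P1 - 1 + P2) / 4 ) + 3/2. -/
/-- Gaussian capacity function: C(x) = (1/2) * log₂(1 + x). -/
noncomputable def C (x : ℝ) : ℝ := (1/2) * Real.logb 2 (1 + x)

theorem C_le_C_add_half_iff {x y k : ℝ} (hx : -1 < x) (hy : -1 < y) :
    C x ≤ C y + k / 2 ↔ 1 + x ≤ 2 ^ k * (1 + y) := by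
  have hx' : 0 < 1 + x := by linarith
  have hy' : 0 < 1 + y := by linarith
  have logb_scaled : Real.logb 2 (2 ^ k * (1 + y)) = k + Real.logb 2 (1 + y) := by
    rw [Real.logb_mul (by positivity) hy'.ne', Real.logb_rpow (by norm_num) (by norm_num)]
  rw [← Real.logb_le_logb one_lt_two hx' (by positivity), logb_scaled, C, C]
  constructor <;> intro h <;> linarith

theorem stmt_1_general {s : ℝ} (hs : -1 / 2 < s) :
    C (2 * s) ≤ C ((s - 1) / 4) + 3 / 2 := by
  rw [C_le_C_add_half_iff (by linarith) (by linarith)]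
  calc
    1 + 2 * s ≤ 8 * (1 + (s - 1) / 4) := by linarith
    _ = 2 ^ (3 : ℝ) * (1 + (s - 1) / 4) := by norm_num

theorem stmt_1 (a P1 P2 : ℝ) (ha : 0 < a) (hP2 : 0 ≤ P2) (hI : 1 ≤ a ^ 2 * P1) :
    C (2 * a ^ 2 * P1 + 2 * P2) ≤ C ((a ^ 2 * P1 - 1 + P2) / 4) + 3 / 2 := by
  have hs : -1 / 2 < a ^ 2 * P1 + P2 := by linarith
  convert stmt_1_general hs using 3 <;> ring
end

section
/- Let a, P1, P2 be real numbers with a > 0, P1 ≥ 0, P2 ≥ 0 and a^2 * P1 ≥ 1. Then C(P1) + C(P2) ≤ C( (min(a^2*P1 - 1, P2) + 2) / (2*a^2) ) + C( max(a^2*P1 - 1, P2) / 4 ) + 3/2. -/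
/-!
With `s = a²` and `x = s P₁ - 1`, the product behind the left-hand side is
`(1 + P₁) (1 + P₂) = (s + 1 + x) (1 + P₂) / s`. Since `s + 1 ≥ 1`, the rearrangement inequality says
that this product can only grow when the smaller of `x` and `P₂` is moved to the first factor and
the larger to the second. After this exchange the two rates are compared one by one: halving an
argument of `C` costs at most `1/2`, and quartering it costs at most `1`.
-/

theorem add_mul_add_le_add_min_mul_add_max {R : Type*} [CommRing R] [LinearOrder R]
    [IsStrictOrderedRing R] {c d : R} (hdc : d ≤ c) (x y : R) :
    (c + x) * (d + y) ≤ (c + min x y) * (d + max x y) := by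
  rcases le_total x y with hxy | hyx
  · rw [min_eq_left hxy, max_eq_right hxy]
  · rw [min_eq_right hyx, max_eq_left hyx]
    linear_combination mul_nonneg (sub_nonneg.2 hdc) (sub_nonneg.2 hyx)

theorem C_le_C {x y : ℝ} (hx : -1 < x) (hxy : x ≤ y) : C x ≤ C y := by
  unfold C
  gcongr
  · exact one_lt_two
  · linarith

theorem C_add_C {x y : ℝ} (hx : -1 < x) (hy : -1 < y) :
    C x + C y = 1 / 2 * Real.logb 2 ((1 + x) * (1 + y)) := by
  rw [Real.logb_mul (by linarith) (by linarith), mul_add, C, C]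

theorem C_le_C_div_add_logb {x t : ℝ} (hx : -1 < x) (ht : 1 ≤ t) :
    C x ≤ C (x / t) + 1 / 2 * Real.logb 2 t := by
  have ht₀ : 0 < t := by linarith
  have hdiv : -1 < x / t := by rw [lt_div_iff₀ ht₀]; linarith
  have hscale : C (x / t) + 1 / 2 * Real.logb 2 t = C (t - 1 + x) := by
    rw [C, C, ← mul_add, ← Real.logb_mul (by linarith) ht₀.ne']
    congr 2
    field_simp
    ring
  exact hscale ▸ C_le_C hx (by linarith)

theorem C_le_C_div_two_add_half {x : ℝ} (hx : -1 < x) : C x ≤ C (x / 2) + 1 / 2 := by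
  simpa using C_le_C_div_add_logb hx one_le_two

theorem C_le_C_div_four_add_one {x : ℝ} (hx : -1 < x) : C x ≤ C (x / 4) + 1 := by
  have hlog : Real.logb 2 4 = 2 := by
    rw [show (4 : ℝ) = 2 ^ (2 : ℝ) by norm_num, Real.logb_rpow two_pos (by norm_num)]
  simpa [hlog] using C_le_C_div_add_logb hx (show (1 : ℝ) ≤ 4 by norm_num)

theorem C_add_C_le_C_min_add_C_max {s x y : ℝ} (hs : 0 < s) (hx : -1 ≤ x) (hy : -1 < y) :
    C ((x + 1) / s) + C y ≤ C ((min x y + 1) / s) + C (max x y) := by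
  have neg_one_lt_div {z : ℝ} (hz : -1 ≤ z) : -1 < (z + 1) / s :=
    neg_one_lt_zero.trans_le (div_nonneg (by linarith) hs.le)
  have one_add_div (z : ℝ) : 1 + (z + 1) / s = (s + 1 + z) / s := by field_simp; ring
  rw [C_add_C (neg_one_lt_div hx) hy,
    C_add_C (neg_one_lt_div (le_min hx hy.le)) (lt_max_of_lt_right hy), one_add_div, one_add_div,
    div_mul_eq_mul_div (s + 1 + x), div_mul_eq_mul_div (s + 1 + min x y)]
  have hpos : 0 < (s + 1 + x) * (1 + y) / s :=
    div_pos (mul_pos (by linarith) (by linarith)) hs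
  gcongr 1 / 2 * Real.logb 2 (?_ / s)
  · exact one_lt_two
  · exact add_mul_add_le_add_min_mul_add_max (by linarith) x y

theorem C_add_one_div_le {s m : ℝ} (hs : 0 < s) (hm : -1 ≤ m) :
    C ((m + 1) / s) ≤ C ((m + 2) / (2 * s)) + 1 / 2 := by
  have harg : 0 ≤ (m + 1) / s := div_nonneg (by linarith) hs.le
  have hhalf : (m + 1) / s / 2 ≤ (m + 2) / (2 * s) := by
    rw [div_div, mul_comm s]
    gcongr
    exact one_le_two
  calc C ((m + 1) / s) ≤ C ((m + 1) / s / 2) + 1 / 2 := C_le_C_div_two_add_half (by linarith)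
    _ ≤ C ((m + 2) / (2 * s)) + 1 / 2 := by
      gcongr
      exact C_le_C (by linarith) hhalf

theorem stmt_2_general (a P1 P2 : ℝ) (ha : a ≠ 0) (hP1 : 0 ≤ P1) (hP2 : 0 ≤ P2) :
    C P1 + C P2 ≤
      C ((min (a ^ 2 * P1 - 1) P2 + 2) / (2 * a ^ 2)) +
        C (max (a ^ 2 * P1 - 1) P2 / 4) + 3 / 2 := by
  have hs : 0 < a ^ 2 := by positivity
  have hx : -1 ≤ a ^ 2 * P1 - 1 := by linarith [mul_nonneg hs.le hP1]
  have hm : -1 ≤ min (a ^ 2 * P1 - 1) P2 := le_min hx (by linarith)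
  have hM : 0 ≤ max (a ^ 2 * P1 - 1) P2 := le_max_of_le_right hP2
  have hP1_eq : (a ^ 2 * P1 - 1 + 1) / a ^ 2 = P1 := by
    rw [sub_add_cancel, mul_div_cancel_left₀ P1 hs.ne']
  have hexchange := C_add_C_le_C_min_add_C_max hs hx (show -1 < P2 by linarith)
  rw [hP1_eq] at hexchange
  have hfirst := C_add_one_div_le hs hm
  have hsecond := C_le_C_div_four_add_one (show -1 < max (a ^ 2 * P1 - 1) P2 by linarith)
  linarith

theorem stmt_2 (a P1 P2 : ℝ) (ha : 0 < a) (hP1 : 0 ≤ P1) (hP2 : 0 ≤ P2)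
    (hI : 1 ≤ a ^ 2 * P1) :
    C P1 + C P2 ≤
      C ((min (a ^ 2 * P1 - 1) P2 + 2) / (2 * a ^ 2)) +
        C (max (a ^ 2 * P1 - 1) P2 / 4) + 3 / 2 :=
  stmt_2_general a P1 P2 ha.ne' hP1 hP2
end

section
/- Let a, P1, P2 be real numbers with 0 < a ≤ 1, P2 ≥ 0 and a^2 * P1 ≥ 1. Then C( (1 - a^2)*P1 / (1 + a^2*P1) ) + C(2*a^2*P1 + 2*P2) − [ C(1/a^2) + C( (a^2*P1 − 1 + P2) / 2 ) − 1/2 ] ≤ 3/2. -/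
theorem C_le_C_add {x y δ : ℝ} (hx : -1 < x) (hxy : 1 + x ≤ 2 ^ (2 * δ) * (1 + y)) :
    C x ≤ C y + δ := by
  have hx' : 0 < 1 + x := by linarith
  have hy : 0 < 1 + y := pos_of_mul_pos_right (hx'.trans_le hxy) (by positivity)
  have hlog : Real.logb 2 (1 + x) ≤ 2 * δ + Real.logb 2 (1 + y) :=
    calc
      Real.logb 2 (1 + x) ≤ Real.logb 2 (2 ^ (2 * δ) * (1 + y)) :=
        Real.logb_le_logb_of_le one_lt_two hx' hxy
      _ = 2 * δ + Real.logb 2 (1 + y) := by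
        rw [Real.logb_mul (by positivity) hy.ne', Real.logb_rpow two_pos (by norm_num)]
  unfold C
  linarith

theorem C_monotoneOn : MonotoneOn C (Set.Ioi (-1)) := fun x hx y _ hxy => by
  simpa only [add_zero] using C_le_C_add (δ := 0) hx (by simpa using hxy)

theorem neg_one_lt_one_sub_mul_div {g P : ℝ} (hg : 0 ≤ g) (hP : 0 ≤ P) :
    -1 < (1 - g) * P / (1 + g * P) := by
  have hden : 0 < 1 + g * P := by positivity
  rw [lt_div_iff₀ hden]
  linarith

theorem one_sub_mul_div_le_one_div {g P : ℝ} (hg : 0 < g) (hP : 0 ≤ P) :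
    (1 - g) * P / (1 + g * P) ≤ 1 / g := by
  have hden : 0 < 1 + g * P := by positivity
  have hsq : 0 ≤ g ^ 2 * P := by positivity
  rw [div_le_div_iff₀ hden hg]
  linarith

theorem C_one_sub_mul_div_le {g P : ℝ} (hg : 0 < g) (hP : 0 ≤ P) :
    C ((1 - g) * P / (1 + g * P)) ≤ C (1 / g) :=
  have hlower := neg_one_lt_one_sub_mul_div hg.le hP
  have hupper := one_sub_mul_div_le_one_div hg hP
  C_monotoneOn hlower (hlower.trans_le hupper) hupper

theorem C_two_mul_le {S : ℝ} (hS : -1 / 2 < S) : C (2 * S) ≤ C ((S - 1) / 2) + 1 :=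
  C_le_C_add (by linarith) <| by
    rw [mul_one, Real.rpow_two]
    linarith

theorem stmt_5_general {a P1 P2 : ℝ} (ha : a ≠ 0) (hP1 : 0 ≤ P1) (hP2 : 0 ≤ P2) :
    C ((1 - a ^ 2) * P1 / (1 + a ^ 2 * P1)) + C (2 * a ^ 2 * P1 + 2 * P2) -
      (C (1 / a ^ 2) + C ((a ^ 2 * P1 - 1 + P2) / 2) - 1 / 2) ≤ 3 / 2 := by
  have hprivate : C ((1 - a ^ 2) * P1 / (1 + a ^ 2 * P1)) ≤ C (1 / a ^ 2) :=
    C_one_sub_mul_div_le (by positivity) hP1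
  have hcommon : C (2 * a ^ 2 * P1 + 2 * P2) ≤ C ((a ^ 2 * P1 - 1 + P2) / 2) + 1 := by
    have hS : 0 ≤ a ^ 2 * P1 + P2 := by positivity
    convert C_two_mul_le (S := a ^ 2 * P1 + P2) (by linarith) using 3 <;> ring
  linarith

theorem stmt_5 (a P1 P2 : ℝ) (ha0 : 0 < a) (ha1 : a ≤ 1) (hP2 : 0 ≤ P2)
    (hI : 1 ≤ a ^ 2 * P1) :
    C ((1 - a ^ 2) * P1 / (1 + a ^ 2 * P1)) + C (2 * a ^ 2 * P1 + 2 * P2) -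
      (C (1 / a ^ 2) + C ((a ^ 2 * P1 - 1 + P2) / 2) - 1 / 2) ≤ 3 / 2 :=
  stmt_5_general ha0.ne' (pos_of_mul_pos_right (one_pos.trans_le hI) (sq_nonneg a)).le hP2
end

section
/- Let a, P1, P2 be real numbers with a > 0, P2 ≥ 0 and 1 ≤ a^2 * P1 ≤ P2 + 1. Then C( P1*P2 + P1*(1 + 2*a^2) + 2*P2 ) ≤ C( (a^2*P1 + 1) / (2*a^2) ) + C(P2 / 4) + 2. -/
/-!
Put `x = a² P₁ - 1` and `y = P₂`. The argument of the logarithm in the genie-aided bound is then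
`(x + 1) (y + 1) / a² + 2 (x + y) + 3`, which is symmetric in `x` and `y` and hence a function of
`m = min x y` and `M = max x y` only. A gap of two bits is a factor `2 ^ 4 = 16` inside the
logarithm, and `16 (1 + (m + 2) / (2 a²)) (1 + M / 4) = 2 (m + 2) (M + 4) / a² + 4 (M + 4)`
dominates the former expression term by term.
-/

theorem C_le_C_add_C_add_iff {x y z k : ℝ} (hx : 0 < 1 + x) (hy : 0 < 1 + y) (hz : 0 < 1 + z) :
    C x ≤ C y + C z + k ↔ 1 + x ≤ 2 ^ (2 * k) * ((1 + y) * (1 + z)) := by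
  have hlogb : Real.logb 2 (2 ^ (2 * k) * ((1 + y) * (1 + z))) =
      2 * k + (Real.logb 2 (1 + y) + Real.logb 2 (1 + z)) := by
    rw [Real.logb_mul (by positivity) (by positivity), Real.logb_mul hy.ne' hz.ne',
      Real.logb_rpow two_pos (by norm_num)]
  rw [← Real.logb_le_logb one_lt_two hx (by positivity), hlogb]
  unfold C
  constructor <;> intro h <;> linarith

theorem add_one_mul_add_one_div_add_le {m M b : ℝ} (hb : 0 ≤ b) (hm : -1 ≤ m) (hmM : m ≤ M) :
    (m + 1) * (M + 1) / b + 2 * (m + M) + 3 ≤ 16 * ((1 + (m + 2) / (2 * b)) * (1 + M / 4)) := by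
  have hmul : (m + 1) * (M + 1) ≤ 2 * ((m + 2) * (M + 4)) := by
    nlinarith [mul_nonneg (neg_le_iff_add_nonneg.mp hm) (neg_le_iff_add_nonneg.mp (hm.trans hmM))]
  calc
    (m + 1) * (M + 1) / b + 2 * (m + M) + 3
      ≤ 2 * ((m + 2) * (M + 4)) / b + 4 * (M + 4) := by
        linarith [div_le_div_of_nonneg_right hmul hb]
    _ = 16 * ((1 + (m + 2) / (2 * b)) * (1 + M / 4)) := by ring

theorem one_add_genieAided_eq_min_max {a : ℝ} (ha : a ≠ 0) (P1 P2 : ℝ) :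
    1 + (P1 * P2 + P1 * (1 + 2 * a ^ 2) + 2 * P2) =
      (min (a ^ 2 * P1 - 1) P2 + 1) * (max (a ^ 2 * P1 - 1) P2 + 1) / a ^ 2 +
        2 * (min (a ^ 2 * P1 - 1) P2 + max (a ^ 2 * P1 - 1) P2) + 3 := by
  rw [min_add_max, ← min_add_add_right, ← max_add_add_right, min_mul_max]
  field_simp
  ring

theorem stmt_12_general {a P1 P2 : ℝ} (ha : a ≠ 0) (hP1 : 0 ≤ P1) (hP2 : 0 ≤ P2) :
    C (P1 * P2 + P1 * (1 + 2 * a ^ 2) + 2 * P2) ≤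
      C ((min (a ^ 2 * P1 - 1) P2 + 2) / (2 * a ^ 2)) + C (max (a ^ 2 * P1 - 1) P2 / 4) + 2 := by
  have hmin : -1 ≤ min (a ^ 2 * P1 - 1) P2 :=
    le_min (by linarith [mul_nonneg (sq_nonneg a) hP1]) (by linarith)
  have hquot : 0 ≤ (min (a ^ 2 * P1 - 1) P2 + 2) / (2 * a ^ 2) :=
    div_nonneg (by linarith) (by positivity)
  have hsixteen : (2 : ℝ) ^ (2 * 2 : ℝ) = 16 := by norm_num
  rw [C_le_C_add_C_add_iff (by positivity) (by positivity) (by positivity), hsixteen,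
    one_add_genieAided_eq_min_max ha]
  exact add_one_mul_add_one_div_add_le (sq_nonneg a) hmin min_le_max

theorem stmt_12 (a P1 P2 : ℝ) (ha : 0 < a) (hP2 : 0 ≤ P2)
    (h1 : 1 ≤ a ^ 2 * P1) (h2 : a ^ 2 * P1 ≤ P2 + 1) :
    C (P1 * P2 + P1 * (1 + 2 * a ^ 2) + 2 * P2) ≤
      C ((a ^ 2 * P1 + 1) / (2 * a ^ 2)) + C (P2 / 4) + 2 := by
  have hP1 : 0 < P1 := pos_of_mul_pos_right (one_pos.trans_le h1) (sq_nonneg a)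
  have hnum : a ^ 2 * P1 - 1 + 2 = a ^ 2 * P1 + 1 := by ring
  have hmin_max : a ^ 2 * P1 - 1 ≤ P2 := sub_le_iff_le_add.mpr h2
  simpa only [min_eq_left hmin_max, max_eq_right hmin_max, hnum] using
    stmt_12_general ha.ne' hP1.le hP2
end

section
/- Let a, P1, P2 be real numbers with P2 ≥ 0 and 0 ≤ a^2 * P1 − 1 ≤ P2. Then C(2*a^2*P1 + 2*P2) ≤ C( P2 − (a^2*P1 − 1)/2 ) + 3/2. -/
theorem C_le_C_add_of_one_add_le {x y b : ℝ} (hx : 0 < 1 + x)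
    (hxy : 1 + x ≤ 2 ^ (2 * b) * (1 + y)) : C x ≤ C y + b := by
  have hpow : (0 : ℝ) < 2 ^ (2 * b) := by positivity
  have hy : 0 < 1 + y := pos_of_mul_pos_right (hx.trans_le hxy) hpow.le
  calc
    C x ≤ 1 / 2 * Real.logb 2 (2 ^ (2 * b) * (1 + y)) :=
      mul_le_mul_of_nonneg_left (Real.logb_le_logb_of_le one_lt_two hx hxy) one_half_pos.le
    _ = 1 / 2 * (2 * b + Real.logb 2 (1 + y)) := by
      rw [Real.logb_mul hpow.ne' hy.ne', Real.logb_rpow two_pos (by norm_num)]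
    _ = C y + b := by
      rw [C]
      ring

-- The constant `11 / 6` is optimal: at `a ^ 2 * P1 = P2 + 11 / 6` the gap is exactly `3 / 2`.
theorem stmt_13_general (a P1 P2 : ℝ) (hP2 : 0 ≤ P2)
    (h0 : 0 ≤ a ^ 2 * P1) (h1 : a ^ 2 * P1 ≤ P2 + 11 / 6) :
    C (2 * a ^ 2 * P1 + 2 * P2) ≤ C (P2 - (a ^ 2 * P1 - 1) / 2) + 3 / 2 := by
  have two_rpow_gap : (2 : ℝ) ^ (2 * (3 / 2) : ℝ) = 8 := by norm_num
  apply C_le_C_add_of_one_add_le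
  · linarith
  · rw [two_rpow_gap]
    linarith

theorem stmt_13 (a P1 P2 : ℝ) (hP2 : 0 ≤ P2)
    (h0 : 0 ≤ a ^ 2 * P1 - 1) (h1 : a ^ 2 * P1 - 1 ≤ P2) :
    C (2 * a ^ 2 * P1 + 2 * P2) ≤ C (P2 - (a ^ 2 * P1 - 1) / 2) + 3 / 2 :=
  stmt_13_general a P1 P2 hP2 (by linarith) (by linarith)
end
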